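/- arXiv:2406.14353 — 2 statements merged into one kernel-verified Lean document; each statement's English description precedes it below -/
import Mathlib

section
/- Let B be a finitely generated abelian group, let I be a finite index set, and for each i in I let H_i ≤ B be a subgroup and y_i ∈ B an element. If there exists an element x ∈ B such that x ∉ y_i + H_i for every i ∈ I, then there exists a finite-index subgroup H ≤ B such that the coset x + H is disjoint from y_i + H_i for every i ∈ I. -/
open Pointwise

/-!
A finitely generated abelian group is residually finite: by the structure theorem it is
`ℤⁿ × T` with `T` finite, and a nonzero element is detected either by projecting to `T` or by
reducing a nonzero coordinate `a` modulo `|a| + 1`. Applying this to the class of `x - y i` in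
`B ⧸ H i` and pulling back yields a finite-index subgroup `K i ≥ H i` with `x - y i ∉ K i`, which
separates `x + K i` from `y i + H i`. The intersection of the `K i` works for all `i` at once.
-/

/-- Finitely generated abelian groups are residually finite. -/
theorem exists_finiteIndex_notMem_of_fg {Q : Type*} [AddCommGroup Q] [AddGroup.FG Q]
    {q : Q} (hq : q ≠ 0) : ∃ K : AddSubgroup Q, K.FiniteIndex ∧ q ∉ K := by
  obtain ⟨n, ι, _, p, hp, e, ⟨φ⟩⟩ := AddCommGroup.equiv_free_prod_directSum_zmod Q
  have : ∀ i, NeZero (p i ^ e i) := fun i => ⟨pow_ne_zero _ (hp i).ne_zero⟩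
  have : Finite (DirectSum ι fun i => ZMod (p i ^ e i)) := by
    classical
    exact Finite.of_equiv _ (DirectSum.addEquivProd fun i => ZMod (p i ^ e i)).toEquiv.symm
  by_cases h1 : (φ q).1 = 0
  · refine ⟨((AddMonoidHom.snd _ _).comp φ.toAddMonoidHom).ker, inferInstance, fun h => hq ?_⟩
    have h2 : (φ q).2 = 0 := h
    exact φ.map_eq_zero_iff.1 (Prod.ext h1 h2)
  · obtain ⟨i, hi⟩ := Finsupp.ne_iff.1 h1
    -- a nonzero integer `a` stays nonzero modulo `|a| + 1`
    set a : ℤ := (φ q).1 i with ha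
    refine ⟨((Int.castAddHom (ZMod (a.natAbs + 1))).comp ((Finsupp.applyAddHom i).comp
      ((AddMonoidHom.fst _ _).comp φ.toAddMonoidHom))).ker, inferInstance, fun h => hi ?_⟩
    have h2 : ((a : ℤ) : ZMod (a.natAbs + 1)) = 0 := h
    rw [ZMod.intCast_zmod_eq_zero_iff_dvd] at h2
    exact Int.eq_zero_of_abs_lt_dvd h2 (by push_cast; rw [Int.abs_eq_natAbs]; omega)

/-- Subgroups of a finitely generated abelian group are closed in the profinite topology. -/
theorem exists_finiteIndex_ge_notMem {B : Type*} [AddCommGroup B] [AddGroup.FG B]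
    (H : AddSubgroup B) {b : B} (hb : b ∉ H) :
    ∃ K : AddSubgroup B, K.FiniteIndex ∧ H ≤ K ∧ b ∉ K := by
  obtain ⟨K, hK, hbK⟩ := exists_finiteIndex_notMem_of_fg (Q := B ⧸ H) (q := (b : B ⧸ H))
    (fun h => hb ((QuotientAddGroup.eq_zero_iff b).1 h))
  refine ⟨K.comap (QuotientAddGroup.mk' H), ⟨?_⟩, fun h hh => ?_, hbK⟩
  · rw [K.index_comap_of_surjective (QuotientAddGroup.mk'_surjective H)]
    exact hK.index_ne_zero
  · have h0 : (h : B ⧸ H) = 0 := (QuotientAddGroup.eq_zero_iff h).2 hh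
    simp [h0]

/-- Let `B` be a finitely generated abelian group, `I` a finite index set, and for each
`i ∈ I` let `H i ≤ B` be a subgroup and `y i ∈ B`. If there is an `x ∈ B` with
`x ∉ y i + H i` for all `i`, then there is a finite-index subgroup `K ≤ B` such that the
coset `x + K` is disjoint from `y i + H i` for every `i`. -/
theorem coset_avoidance_of_finitelyGenerated {B : Type*} [AddCommGroup B]
    (hB : AddGroup.FG B) {I : Type*} [Finite I] (H : I → AddSubgroup B) (y : I → B) (x : B)
    (hx : ∀ i : I, x ∉ y i +ᵥ (H i : Set B)) :
    ∃ K : AddSubgroup B, K.FiniteIndex ∧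
      ∀ i : I, Disjoint (x +ᵥ (K : Set B)) (y i +ᵥ (H i : Set B)) := by
  have hx' : ∀ i, x - y i ∉ H i := fun i h =>
    hx i ⟨x - y i, h, by simp⟩
  choose K hK hHK hxK using fun i => exists_finiteIndex_ge_notMem (H i) (hx' i)
  refine ⟨⨅ i, K i, AddSubgroup.finiteIndex_iInf hK, fun i => Set.disjoint_left.2 ?_⟩
  rintro _ ⟨k, hk, rfl⟩ ⟨h, hh, heq⟩
  have hk' : k ∈ K i := AddSubgroup.mem_iInf.1 hk i
  have heq' : y i + h = x + k := heq
  have hdiff : x - y i = h - k := by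
    rw [sub_eq_sub_iff_add_eq_add, ← heq', add_comm]
  exact hxK i (hdiff ▸ sub_mem (hHK i hh) hk')
end

section
/- Let g be a nonnegative integer and let d1, d2 be integers with 2 ≤ d1 < √g + 1 and 2 ≤ d2 < √g + 1. Then for any positive proper divisor d3 of gcd(d1, d2) (i.e., d3 divides gcd(d1,d2), d3 ≥ 1, and d3 < gcd(d1,d2) or at least d3 ≠ d1 and d3 ≠ d2 as a proper common divisor), the following inequality of real numbers holds: (d1/d3 − 1)·(d2/d3 − 1) + (d1/d3)·((√g + 1)/d1 − 1)² + (d2/d3)·((√g + 1)/d2 − 1)² < ((√g + 1)/d3 − 1)². -/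
/-!
Put `a = d1 / d3`, `b = d2 / d3` and `x = (√g + 1) / d3`. Since `d3` is a proper divisor of the
gcd, `a` and `b` are integers at least `2`, and `x > max a b`. Expanding and clearing denominators,
the claim becomes `f x > 0` for `f x = x² (ab - a - b) + 2abx - a²b²`. As `ab - a - b ≥ 0`, `f` is
strictly increasing on the positive reals, and for `a ≤ b` one has `f b = b² (b - a) (a - 1) ≥ 0`.
-/

/-- The cleared-denominator inequality, under the symmetry-breaking assumption `a ≤ b`. -/
lemma key_poly_of_le {a b x : ℝ} (ha : 2 ≤ a) (hab : a ≤ b) (hx : b < x) :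
    0 < x ^ 2 * (a * b - a - b) + 2 * a * b * x - a ^ 2 * b ^ 2 := by
  have hcoef : 0 ≤ a * b - a - b := by nlinarith
  have hquad : 0 ≤ (x ^ 2 - b ^ 2) * (a * b - a - b) :=
    mul_nonneg (by nlinarith) hcoef
  have hlin : 0 < 2 * (a * b) * (x - b) :=
    mul_pos (by nlinarith) (by linarith)
  have hend : 0 ≤ b ^ 2 * ((b - a) * (a - 1)) :=
    mul_nonneg (sq_nonneg b) (mul_nonneg (by linarith) (by linarith))
  -- The three terms sum to the goal: `f x = (f x - f b) + f b`.
  linarith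

lemma key_poly {a b x : ℝ} (ha : 2 ≤ a) (hb : 2 ≤ b) (hax : a < x) (hbx : b < x) :
    0 < x ^ 2 * (a * b - a - b) + 2 * a * b * x - a ^ 2 * b ^ 2 := by
  rcases le_total a b with h | h
  · exact key_poly_of_le ha h hbx
  · linarith [key_poly_of_le hb h hax]

/-- The inequality in the normalized variables `a = d1 / d3`, `b = d2 / d3`,
`x = (√g + 1) / d3`. -/
lemma key_normalized {a b x : ℝ} (ha : 2 ≤ a) (hb : 2 ≤ b) (hax : a < x) (hbx : b < x) :
    (a - 1) * (b - 1) + a * (x / a - 1) ^ 2 + b * (x / b - 1) ^ 2 < (x - 1) ^ 2 := by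
  have ha0 : 0 < a := by linarith
  have hb0 : 0 < b := by linarith
  have hdiff : (x - 1) ^ 2 - ((a - 1) * (b - 1) + a * (x / a - 1) ^ 2 + b * (x / b - 1) ^ 2)
      = (x ^ 2 * (a * b - a - b) + 2 * a * b * x - a ^ 2 * b ^ 2) / (a * b) := by
    field_simp
    ring
  have hpos := div_pos (key_poly ha hb hax hbx) (mul_pos ha0 hb0)
  linarith

/-- A proper divisor `e` of a divisor `n` of `d` satisfies `d / e ≥ 2`. -/
lemma two_le_div_of_proper {d e n : ℕ} (hd : 0 < d) (he : 0 < e) (hen : e ∣ n) (hnd : n ∣ d)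
    (hne : e ≠ n) : (2 : ℝ) ≤ (d : ℝ) / (e : ℝ) := by
  have hlt : e < d :=
    lt_of_lt_of_le (lt_of_le_of_ne (Nat.le_of_dvd (Nat.pos_of_dvd_of_pos hnd hd) hen) hne)
      (Nat.le_of_dvd hd hnd)
  obtain ⟨k, rfl⟩ := hen.trans hnd
  have hk : 2 ≤ k := by
    by_contra hk
    have : e * k ≤ e * 1 := Nat.mul_le_mul_left e (by omega)
    omega
  have he' : (0 : ℝ) < e := by exact_mod_cast he
  have hk' : (2 : ℝ) ≤ k := by exact_mod_cast hk
  rw [Nat.cast_mul, mul_div_cancel_left₀ _ he'.ne']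
  exact hk'

/-- Let `g` be a nonnegative integer and `d1, d2` integers with `2 ≤ dᵢ < √g + 1`. Then for
any positive proper divisor `d3` of `gcd(d1, d2)` the stated inequality of real numbers
holds. -/
theorem key_inequality (g d1 d2 d3 : ℕ)
    (h1 : 2 ≤ d1) (h1' : (d1 : ℝ) < Real.sqrt g + 1)
    (h2 : 2 ≤ d2) (h2' : (d2 : ℝ) < Real.sqrt g + 1)
    (h3 : 0 < d3) (hdvd : d3 ∣ Nat.gcd d1 d2) (hproper : d3 ≠ Nat.gcd d1 d2) :
    ((d1 : ℝ) / (d3 : ℝ) - 1) * ((d2 : ℝ) / (d3 : ℝ) - 1)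
        + ((d1 : ℝ) / (d3 : ℝ)) * ((Real.sqrt g + 1) / (d1 : ℝ) - 1) ^ 2
        + ((d2 : ℝ) / (d3 : ℝ)) * ((Real.sqrt g + 1) / (d2 : ℝ) - 1) ^ 2
      < ((Real.sqrt g + 1) / (d3 : ℝ) - 1) ^ 2 := by
  have h3' : (0 : ℝ) < d3 := by exact_mod_cast h3
  have ha := two_le_div_of_proper (by omega) h3 hdvd (Nat.gcd_dvd_left d1 d2) hproper
  have hb := two_le_div_of_proper (by omega) h3 hdvd (Nat.gcd_dvd_right d1 d2) hproper
  have key := key_normalized ha hb (div_lt_div_of_pos_right h1' h3')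
    (div_lt_div_of_pos_right h2' h3')
  rwa [div_div_div_cancel_right₀ h3'.ne', div_div_div_cancel_right₀ h3'.ne'] at key
end
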